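/- Let n ≥ 2. The minimal cardinality of a generating set of the additive monoid M_n is exactly 2^n + 1: the set S_n generates M_n and has 2^n + 1 elements, while no subset of M_n of cardinality strictly less than 2^n + 1 generates M_n. In particular, the number of linear sigma-model fields in the GLSM description of the A_{n−1} singularity ℂ²/ℤ_n is 2^n + 1. -/

import Mathlib

/-- The `m`-th standard basis vector `e_m` of `ℤ^(n+2)` (coordinates indexed by `ℕ`,
vanishing outside `{0,…,n+1}`). -/
def e (m : ℕ) : ℕ → ℤ := fun j => if j = m then 1 else 0

/-- The pairing `v·k = ∑_{m=0}^{n+1} v_m k_m` on `ℤ^(n+2)`. -/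
def dot (n : ℕ) (v k : ℕ → ℤ) : ℤ := ∑ m ∈ Finset.range (n + 2), v m * k m

/-- `M_n`: the lattice points of the dual cone, namely all `v ∈ ℤ^(n+2)` with
`v_m ≥ 0` for every coordinate `m` and `v_1 + v_2 ≥ v_{i+1}` for every `i ∈ {2,…,n}`. -/
def Mset (n : ℕ) : Set (ℕ → ℤ) :=
  {v | (∀ m, 0 ≤ v m) ∧ (∀ m, n + 1 < m → v m = 0) ∧
       (∀ i, 2 ≤ i → i ≤ n → v (i + 1) ≤ v 1 + v 2)}

/-- A zero-one vector in `ℤ^(n+2)` vanishing on coordinates `0`, `1` and `2`. -/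
def ZeroOne (n : ℕ) (w : ℕ → ℤ) : Prop :=
  (∀ m, w m = 0 ∨ w m = 1) ∧ w 0 = 0 ∧ w 1 = 0 ∧ w 2 = 0 ∧
    ∀ m, n + 1 < m → w m = 0

/-- The candidate generating set `S_n`: the vector `e_0`, together with the vectors
`e_1 + w` and `e_2 + w` where `w` ranges over zero-one vectors vanishing on
coordinates `0`, `1`, `2`. -/
def Sset (n : ℕ) : Set (ℕ → ℤ) :=
  {v | v = e 0 ∨ ∃ w, ZeroOne n w ∧ (v = e 1 + w ∨ v = e 2 + w)}

/-!
Grade `M_n` by `v ↦ v 0 + v 1 + v 2`. This degree is nonnegative on `M_n` and vanishes only at `0`,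
so an element of degree one is indecomposable and lies in every generating set; all elements of
`S_n` have degree one. Conversely, from a nonzero `v ∈ M_n` one can always subtract an element of
`S_n` without leaving `M_n`: either `e_0`, or `e_j + w` with `j ∈ {1, 2}`, where `w` is the
indicator of the coordinates `m ≥ 3` at which `v` is positive. Subtracting `w` lowers every positive
`v m` by one, which keeps pace with the decrease of the bound `v 1 + v 2`.
-/

section Generation

open AddSubmonoid

lemma mem_of_isAddIndecomposable_closure {A : Type*} [AddMonoid A] {G : Set A} {x : A}
    (hx : IsAddIndecomposable id (closure G : Set A) x) (hx0 : x ≠ 0) : x ∈ G := by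
  obtain ⟨hxG, hsplit⟩ := hx
  suffices ∀ y ∈ closure G, y = x → y ∈ G from this x hxG rfl
  intro y hy
  induction hy using closure_induction with
  | mem y hy => exact fun _ => hy
  | zero => exact fun h => absurd h.symm hx0
  | add y z hy hz ihy ihz =>
    intro h
    rcases hsplit y hy z hz h.symm with rfl | rfl
    · rw [zero_add] at h ⊢
      exact ihz h
    · rw [add_zero] at h ⊢
      exact ihy h

lemma isAddIndecomposable_of_map_eq_one {A : Type*} [AddMonoid A] {M : AddSubmonoid A}
    {deg : A →+ ℤ} (deg_nonneg : ∀ v ∈ M, 0 ≤ deg v) (eq_zero : ∀ v ∈ M, deg v = 0 → v = 0)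
    {x : A} (hx : x ∈ M) (hdeg : deg x = 1) : IsAddIndecomposable id (M : Set A) x := by
  refine ⟨hx, fun y hy z hz hyz => ?_⟩
  have hsum : deg y + deg z = 1 := by rw [← map_add, ← hdeg]; exact congrArg deg hyz.symm
  have hy_nonneg := deg_nonneg y hy
  have hz_nonneg := deg_nonneg z hz
  rcases (by omega : deg y = 0 ∨ deg z = 0) with h | h
  · exact .inl (eq_zero y hy h)
  · exact .inr (eq_zero z hz h)

lemma le_closure_of_exists_sub_mem {A : Type*} [AddGroup A] {M : AddSubmonoid A} {S : Set A}
    {deg : A →+ ℤ} (deg_nonneg : ∀ v ∈ M, 0 ≤ deg v) (deg_pos : ∀ s ∈ S, 0 < deg s)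
    (exists_sub_mem : ∀ v ∈ M, v ≠ 0 → ∃ s ∈ S, v - s ∈ M) : M ≤ closure S := by
  intro v hv
  induction hd : (deg v).toNat using Nat.strong_induction_on generalizing v with
  | _ d ih =>
    rcases eq_or_ne v 0 with rfl | hv0
    · exact zero_mem _
    obtain ⟨s, hs, hvs⟩ := exists_sub_mem v hv hv0
    have hlt : (deg (v - s)).toNat < d := by
      have hs_pos := deg_pos s hs
      have hvs_nonneg := deg_nonneg _ hvs
      rw [map_sub] at hvs_nonneg ⊢
      omega
    rw [← sub_add_cancel v s]
    exact add_mem (ih _ hlt hvs rfl) (subset_closure hs)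

end Generation

section Cone

variable {n : ℕ} {v : ℕ → ℤ}

lemma le_add_of_mem_Mset (hv : v ∈ Mset n) {m : ℕ} (hm : 3 ≤ m) : v m ≤ v 1 + v 2 := by
  obtain ⟨nonneg, vanish, bound⟩ := hv
  rcases le_or_gt m (n + 1) with hmn | hmn
  · obtain ⟨i, rfl⟩ := Nat.exists_eq_add_of_le' (by omega : 1 ≤ m)
    exact bound i (by omega) (by omega)
  · rw [vanish m hmn]
    exact add_nonneg (nonneg 1) (nonneg 2)

/-- The dual cone monoid `M_n` as an additive submonoid of the ambient lattice. -/
def coneMonoid (n : ℕ) : AddSubmonoid (ℕ → ℤ) where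
  carrier := Mset n
  zero_mem' := ⟨fun _ => le_rfl, fun _ _ => rfl, fun _ _ _ => le_rfl⟩
  add_mem' := by
    rintro u v ⟨hu, hu_vanish, hu_bound⟩ ⟨hv, hv_vanish, hv_bound⟩
    refine ⟨fun m => add_nonneg (hu m) (hv m), fun m hm => ?_, fun i hi hin => ?_⟩
    · rw [Pi.add_apply, hu_vanish m hm, hv_vanish m hm, add_zero]
    · simp only [Pi.add_apply]
      linarith [hu_bound i hi hin, hv_bound i hi hin]

/-- The grading `v ↦ v 0 + v 1 + v 2` whose degree-one elements are the generators of `M_n`. -/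
def coneDegree : (ℕ → ℤ) →+ ℤ where
  toFun v := v 0 + v 1 + v 2
  map_zero' := rfl
  map_add' u v := by simp only [Pi.add_apply]; ring

lemma coneDegree_apply (v : ℕ → ℤ) : coneDegree v = v 0 + v 1 + v 2 := rfl

lemma coneDegree_nonneg (hv : v ∈ Mset n) : 0 ≤ coneDegree v :=
  add_nonneg (add_nonneg (hv.1 0) (hv.1 1)) (hv.1 2)

lemma eq_zero_of_coneDegree_eq_zero (hv : v ∈ Mset n) (hdeg : coneDegree v = 0) : v = 0 := by
  rw [coneDegree_apply] at hdeg
  have h0 := hv.1 0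
  have h1 := hv.1 1
  have h2 := hv.1 2
  funext m
  change v m = 0
  rcases (by omega : m = 0 ∨ m = 1 ∨ m = 2 ∨ 3 ≤ m) with rfl | rfl | rfl | hm
  iterate 3 omega
  have hm_nonneg := hv.1 m
  have hm_le := le_add_of_mem_Mset hv hm
  omega

lemma sub_e_zero_mem_Mset (hv : v ∈ Mset n) (hpos : 0 < v 0) : v - e 0 ∈ Mset n := by
  obtain ⟨nonneg, vanish, bound⟩ := hv
  refine ⟨fun m => ?_, fun m hm => ?_, fun i hi hin => ?_⟩
  · have := nonneg m
    simp only [Pi.sub_apply, e]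
    split_ifs with h
    · subst h; omega
    · omega
  · rw [Pi.sub_apply, vanish m hm, e, if_neg (by omega), sub_zero]
  · simpa [e] using bound i hi hin

/-- The zero-one vector marking the coordinates `m ≥ 3` at which `v` is positive. -/
noncomputable def tailIndicator (v : ℕ → ℤ) : ℕ → ℤ := {m | 3 ≤ m ∧ 0 < v m}.indicator 1

lemma tailIndicator_apply (v : ℕ → ℤ) (m : ℕ) :
    tailIndicator v m = if 3 ≤ m ∧ 0 < v m then 1 else 0 := by
  classical
  simp [tailIndicator, Set.indicator_apply]

lemma sub_e_add_tailIndicator_mem_Mset (hv : v ∈ Mset n) {j : ℕ} (hj : j = 1 ∨ j = 2)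
    (hpos : 0 < v j) : v - (e j + tailIndicator v) ∈ Mset n := by
  obtain ⟨nonneg, vanish, bound⟩ := hv
  refine ⟨fun m => ?_, fun m hm => ?_, fun i hi hin => ?_⟩
  · have := nonneg m
    simp only [Pi.sub_apply, Pi.add_apply, e, tailIndicator_apply]
    grind
  · have := vanish m hm
    simp only [Pi.sub_apply, Pi.add_apply, e, tailIndicator_apply]
    grind
  · have hbound_drop : (v - (e j + tailIndicator v)) 1 + (v - (e j + tailIndicator v)) 2 =
        v 1 + v 2 - 1 := by
      rcases hj with rfl | rfl <;> simp [e, tailIndicator_apply] <;> ring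
    have hcoord : (v - (e j + tailIndicator v)) (i + 1) = max (v (i + 1) - 1) 0 := by
      have := nonneg (i + 1)
      simp only [Pi.sub_apply, Pi.add_apply, e, tailIndicator_apply]
      grind
    have hsum_pos : 0 < v 1 + v 2 := by
      have h1 := nonneg 1
      have h2 := nonneg 2
      rcases hj with rfl | rfl <;> omega
    rw [hbound_drop, hcoord]
    exact max_le (sub_le_sub_right (bound i hi hin) 1) (by omega)

end Cone

section Generators

variable {n : ℕ}

lemma zeroOne_indicator {T : Set ℕ} (hT : T ⊆ Set.Icc 3 (n + 1)) :
    ZeroOne n (T.indicator 1) := by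
  have vanish (m : ℕ) (hm : m < 3 ∨ n + 1 < m) : T.indicator (1 : ℕ → ℤ) m = 0 :=
    Set.indicator_of_notMem (fun hmT => by have := hT hmT; grind) _
  refine ⟨fun m => ?_, vanish 0 (by simp), vanish 1 (by simp), vanish 2 (by simp),
    fun m hm => vanish m (.inr hm)⟩
  by_cases hm : m ∈ T <;> simp [hm]

lemma ZeroOne.support_subset {w : ℕ → ℤ} (hw : ZeroOne n w) :
    Function.support w ⊆ Set.Icc 3 (n + 1) := by
  obtain ⟨-, h0, h1, h2, vanish⟩ := hw
  intro m hm
  constructor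
  · by_contra! hlt
    interval_cases m <;> contradiction
  · by_contra! hgt
    exact hm (vanish m hgt)

lemma ZeroOne.indicator_support {w : ℕ → ℤ} (hw : ZeroOne n w) :
    (Function.support w).indicator 1 = w := by
  funext m
  rcases hw.1 m with h | h <;> simp [h]

lemma setOf_zeroOne_eq_image (n : ℕ) :
    {w | ZeroOne n w} = (fun T : Set ℕ => T.indicator 1) '' 𝒫 (Set.Icc 3 (n + 1)) := by
  ext w
  constructor
  · exact fun hw => ⟨_, hw.support_subset, hw.indicator_support⟩
  · rintro ⟨T, hT, rfl⟩
    exact zeroOne_indicator hT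

lemma encard_setOf_zeroOne (n : ℕ) : {w | ZeroOne n w}.encard = 2 ^ (n - 1) := by
  have hfin : (Set.Icc 3 (n + 1)).Finite := Set.finite_Icc _ _
  have hinj : Function.Injective fun T : Set ℕ => T.indicator (1 : ℕ → ℤ) :=
    fun _ _ h => Set.indicator_one_inj ℤ h
  rw [setOf_zeroOne_eq_image, hinj.encard_image, ← hfin.powerset.cast_ncard_eq,
    Set.ncard_powerset _ hfin, ← Finset.coe_Icc, Set.ncard_coe_finset, Nat.card_Icc]
  norm_cast

lemma Sset_eq_insert_union (n : ℕ) : Sset n =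
    insert (e 0) ((e 1 + ·) '' {w | ZeroOne n w} ∪ (e 2 + ·) '' {w | ZeroOne n w}) := by
  ext v
  simp only [Sset, Set.mem_ofPred_eq, Set.mem_insert_iff, Set.mem_union, Set.mem_image, and_or_left,
    exists_or, eq_comm]

lemma encard_Sset (hn : 1 ≤ n) : (Sset n).encard = 2 ^ n + 1 := by
  have hdisj : Disjoint ((e 1 + ·) '' {w | ZeroOne n w}) ((e 2 + ·) '' {w | ZeroOne n w}) := by
    rw [Set.disjoint_left]
    rintro _ ⟨w, ⟨-, -, hw1, -⟩, rfl⟩ ⟨u, ⟨-, -, hu1, -⟩, h⟩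
    simpa [e, hw1, hu1] using congrFun h 1
  have hnotMem : e 0 ∉ (e 1 + ·) '' {w | ZeroOne n w} ∪ (e 2 + ·) '' {w | ZeroOne n w} := by
    rintro (⟨w, ⟨-, hw0, -⟩, h⟩ | ⟨w, ⟨-, hw0, -⟩, h⟩) <;>
      simpa [e, hw0] using congrFun h 0
  rw [Sset_eq_insert_union, Set.encard_insert_of_notMem hnotMem, Set.encard_union_eq hdisj,
    (add_right_injective _).encard_image, (add_right_injective _).encard_image,
    encard_setOf_zeroOne, ← two_mul, ← pow_succ', Nat.sub_add_cancel hn]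

lemma coneDegree_eq_one_of_mem_Sset {s : ℕ → ℤ} (hs : s ∈ Sset n) : coneDegree s = 1 := by
  rcases hs with rfl | ⟨w, ⟨-, h0, h1, h2, -⟩, rfl | rfl⟩ <;> simp [coneDegree_apply, e, *]

lemma e_zero_mem_Mset (n : ℕ) : e 0 ∈ Mset n := by
  refine ⟨fun m => ?_, fun m hm => if_neg (by omega), fun i _ _ => by simp [e]⟩
  simp only [e]
  split_ifs <;> simp

lemma e_add_mem_Mset (hn : 1 ≤ n) {j : ℕ} (hj : j = 1 ∨ j = 2) {w : ℕ → ℤ}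
    (hw : ZeroOne n w) : e j + w ∈ Mset n := by
  obtain ⟨zero_or_one, -, h1, h2, vanish⟩ := hw
  refine ⟨fun m => ?_, fun m hm => ?_, fun i hi _ => ?_⟩
  · have := zero_or_one m
    simp only [e, Pi.add_apply]
    split_ifs <;> omega
  · rw [Pi.add_apply, vanish m hm, add_zero]
    exact if_neg (by omega)
  · have := zero_or_one (i + 1)
    simp only [e, Pi.add_apply, h1, h2]
    split_ifs <;> omega

lemma Sset_subset_Mset (hn : 1 ≤ n) : Sset n ⊆ Mset n := by
  rintro v (rfl | ⟨w, hw, rfl | rfl⟩)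
  · exact e_zero_mem_Mset n
  · exact e_add_mem_Mset hn (.inl rfl) hw
  · exact e_add_mem_Mset hn (.inr rfl) hw

lemma zeroOne_tailIndicator {v : ℕ → ℤ} (hv : v ∈ Mset n) : ZeroOne n (tailIndicator v) := by
  refine zeroOne_indicator fun m ⟨hm, hpos⟩ => ⟨hm, ?_⟩
  by_contra! hgt
  exact hpos.ne' (hv.2.1 m hgt)

lemma exists_mem_Sset_sub_mem_Mset {v : ℕ → ℤ} (hv : v ∈ Mset n) (hv0 : v ≠ 0) :
    ∃ s ∈ Sset n, v - s ∈ Mset n := by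
  have hdeg : v 0 + v 1 + v 2 ≠ 0 := fun h => hv0 (eq_zero_of_coneDegree_eq_zero hv h)
  have h0 := hv.1 0
  have h1 := hv.1 1
  have h2 := hv.1 2
  have hw := zeroOne_tailIndicator hv
  rcases (by omega : 0 < v 0 ∨ 0 < v 1 ∨ 0 < v 2) with hpos | hpos | hpos
  · exact ⟨_, .inl rfl, sub_e_zero_mem_Mset hv hpos⟩
  · exact ⟨_, .inr ⟨_, hw, .inl rfl⟩, sub_e_add_tailIndicator_mem_Mset hv (.inl rfl) hpos⟩
  · exact ⟨_, .inr ⟨_, hw, .inr rfl⟩, sub_e_add_tailIndicator_mem_Mset hv (.inr rfl) hpos⟩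

lemma coneMonoid_le_closure_Sset (n : ℕ) : coneMonoid n ≤ AddSubmonoid.closure (Sset n) :=
  le_closure_of_exists_sub_mem (fun _ => coneDegree_nonneg)
    (fun _ hs => (coneDegree_eq_one_of_mem_Sset hs).symm ▸ one_pos)
    (fun _ => exists_mem_Sset_sub_mem_Mset)

lemma Sset_subset_of_closure_eq (hn : 1 ≤ n) {G : Set (ℕ → ℤ)}
    (hG : AddSubmonoid.closure G = coneMonoid n) : Sset n ⊆ G := by
  intro s hs
  have hdeg := coneDegree_eq_one_of_mem_Sset hs
  have hs0 : s ≠ 0 := by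
    rintro rfl
    simp at hdeg
  have hindec : IsAddIndecomposable id (coneMonoid n : Set (ℕ → ℤ)) s :=
    isAddIndecomposable_of_map_eq_one (fun _ => coneDegree_nonneg)
      (fun _ => eq_zero_of_coneDegree_eq_zero) (Sset_subset_Mset hn hs) hdeg
  exact mem_of_isAddIndecomposable_closure (hG ▸ hindec) hs0

end Generators

/-- the minimal cardinality of a generating set of the additive monoid `M_n`
is exactly `2^n + 1`: the set `S_n ⊆ M_n` generates `M_n` and has `2^n + 1` elements,
while any generating subset `G ⊆ M_n` has at least `2^n + 1` elements. In particular the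
number of linear sigma-model fields in the GLSM description of `ℂ²/ℤ_n` is `2^n + 1`. -/
theorem statement6 (n : ℕ) (hn : 2 ≤ n) :
    Sset n ⊆ Mset n ∧
    (∀ v ∈ Mset n, v ∈ AddSubmonoid.closure (Sset n)) ∧
    (Sset n).encard = 2 ^ n + 1 ∧
    ∀ G ⊆ Mset n, (∀ v ∈ Mset n, v ∈ AddSubmonoid.closure G) →
      (2 ^ n + 1 : ℕ∞) ≤ G.encard := by
  have hn1 : 1 ≤ n := one_le_two.trans hn
  refine ⟨Sset_subset_Mset hn1, coneMonoid_le_closure_Sset n, encard_Sset hn1, fun G hG hgen => ?_⟩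
  have hclosure : AddSubmonoid.closure G = coneMonoid n :=
    le_antisymm (AddSubmonoid.closure_le.2 hG) hgen
  rw [← encard_Sset hn1]
  exact Set.encard_le_encard (Sset_subset_of_closure_eq hn1 hclosure)
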